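/- For every positive integer N, the rational number ∑_{λ ⊢ N} ∏_{h ∈ H(λ)} (1 − 9/h²), where the sum is over all partitions λ of N and the product is over the multiset H(λ) of hook lengths of λ, equals 0 if and only if there are no 3-core partitions of N. -/

import Mathlib

/-- The length of the `j`-th column (0-indexed) of the Young diagram of `p`,
i.e. the `(j+1)`-st part of the conjugate partition: the number of parts of `p`
exceeding `j`. -/
def colLen {N : ℕ} (p : N.Partition) (j : ℕ) : ℕ :=
  (p.parts.filter (fun a => j < a)).card

/-- The length of the `i`-th row (0-indexed) of the Young diagram of `p`,
i.e. the `(i+1)`-st part of `p` (conjugating twice recovers the partition). -/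
def rowLen {N : ℕ} (p : N.Partition) (i : ℕ) : ℕ :=
  ((Finset.range N).filter (fun j => i < colLen p j)).card

/-- The multiset of hook lengths of `p`: for each cell `(i, j)` (0-indexed) of the
Young diagram, the hook length is `λ_{i+1} - (j+1) + λ'_{j+1} - (i+1) + 1`. -/
def hooks {N : ℕ} (p : N.Partition) : Multiset ℕ :=
  (((Finset.range N) ×ˢ (Finset.range N)).filter
      (fun c => c.2 < rowLen p c.1)).val.map
    (fun c => rowLen p c.1 + colLen p c.2 - c.1 - c.2 - 1)

/-- A partition is a `3`-core if none of its hook lengths is divisible by `3`. -/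
def IsThreeCore {N : ℕ} (p : N.Partition) : Prop :=
  ∀ h ∈ hooks p, ¬ (3 ∣ h)

/-!
The nonzero terms of the sum come from the `3`-cores of `N`, since a partition that is not a
`3`-core has a hook of length `3`. A `3`-core is given by its abacus, that is by two runner lengths
`(a, b)`, and these correspond to the Eisenstein integers `x ≡ 1` modulo `√-3` of norm `3 * N + 1`
in a fundamental domain for multiplication by `ω`. The hook product of the `3`-core is half the
trace of `x ^ 3`, so six times the sum in question is the trace of `∑ x ^ 3`, over all `x ≡ 1`
modulo `√-3` of norm `3 * N + 1`.

This power sum is nonzero as soon as it has a term. Take a prime `π` dividing one of the `x`. If `π`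
divides its conjugate, then it divides all of them, and the sum is `π ^ 3` times the sum for a
smaller norm. Otherwise the powers of `π` and of its conjugate can be split off: what remains is the
sum for a norm prime to `π`, times a factor that is congruent to a power of the conjugate of `π`
modulo `π`, hence nonzero.
-/

@[to_additive]
theorem eq_prod_iterate_mul {α M : Type*} [CommMonoid M] {f : α → α} {F g : α → M}
    (h : ∀ a, F a = g a * F (f a)) (n : ℕ) (a : α) :
    F a = (∏ k ∈ Finset.range n, g (f^[k] a)) * F (f^[n] a) := by
  induction n with
  | zero => simp
  | succ n ih =>
    rw [ih, Finset.prod_range_succ, mul_assoc, Function.iterate_succ_apply', ← h]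

theorem prod_range_one_sub_sq_div_sq {K : Type*} [Field K] {a d : K}
    (h : ∀ i : ℕ, d * i + a - d ≠ 0) (n : ℕ) :
    ∏ i ∈ Finset.range n, (1 - d ^ 2 / (d * i + a) ^ 2) =
      (a - d) * (d * n + a) / (a * (d * n + a - d)) := by
  have h' (i : ℕ) : d * i + a ≠ 0 := by
    have := h (i + 1)
    push_cast at this
    rwa [mul_add, mul_one, add_right_comm, add_sub_cancel_right] at this
  have ha : a ≠ 0 := by simpa using h' 0
  induction n with
  | zero =>
    have had : a - d ≠ 0 := by simpa using h 0
    simp only [Finset.range_zero, Finset.prod_empty, Nat.cast_zero, mul_zero, zero_add]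
    field_simp
  | succ n ih =>
    have h₁ := h n
    have h₂ := h' n
    have h₃ := h (n + 1)
    rw [Finset.prod_range_succ, ih]
    push_cast at h₃ ⊢
    field_simp
    ring

theorem lt_card_filter_range_iff {f : ℕ → ℕ} (hf : Antitone f) {n : ℕ} (hn : f n = 0) {i j : ℕ} :
    j < ((Finset.range n).filter fun k => i < f k).card ↔ i < f j := by
  constructor
  · intro h
    by_contra! hij
    have hsub : (Finset.range n).filter (fun k => i < f k) ⊆ Finset.range j := fun k hk =>
      Finset.mem_range.2 (hf.reflect_lt (hij.trans_lt (Finset.mem_filter.1 hk).2))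
    exact h.not_ge (Finset.card_range j ▸ Finset.card_le_card hsub)
  · intro h
    have hsub : Finset.range (j + 1) ⊆ (Finset.range n).filter (fun k => i < f k) := fun k hk => by
      have hik : i < f k := h.trans_le (hf (Finset.mem_range_succ_iff.1 hk))
      refine Finset.mem_filter.2 ⟨Finset.mem_range.2 (hf.reflect_lt ?_), hik⟩
      exact hn ▸ hik.pos
    exact (Finset.card_range (j + 1)).ge.trans (Finset.card_le_card hsub)

theorem sum_card_filter_lt {s : Multiset ℕ} {n : ℕ} (h : ∀ a ∈ s, a ≤ n) :
    ∑ j ∈ Finset.range n, (s.filter (j < ·)).card = s.sum := by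
  induction s using Multiset.induction with
  | empty => simp
  | cons a s ih =>
    have hcard (j : ℕ) : ((a ::ₘ s).filter (j < ·)).card =
        (if j < a then 1 else 0) + (s.filter (j < ·)).card := by
      rw [Multiset.filter_cons]
      split_ifs <;> simp [add_comm]
    have hrange : (Finset.range n).filter (· < a) = Finset.range a := by
      ext j
      simp only [Finset.mem_filter, Finset.mem_range, and_iff_right_iff_imp]
      exact fun hj => hj.trans_le (h a (Multiset.mem_cons_self a s))
    simp_rw [hcard]
    rw [Finset.sum_add_distrib, ih fun b hb => h b (Multiset.mem_cons_of_mem hb),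
      ← Finset.card_filter, hrange, Finset.card_range, Multiset.sum_cons]

theorem card_filter_lt_eq_count_add (s : Multiset ℕ) (j : ℕ) :
    (s.filter (j < ·)).card = s.count (j + 1) + (s.filter (j + 1 < ·)).card := by
  induction s using Multiset.induction with
  | empty => simp
  | cons a s ih =>
    rw [Multiset.filter_cons, Multiset.filter_cons, Multiset.count_cons]
    split_ifs <;> simp <;> omega

theorem two_mul_abs_bmod_le (a : ℤ) {n : ℕ} (hn : 0 < n) : 2 * |a.bmod n| ≤ n := by
  have h₁ := Int.le_bmod (x := a) hn
  have h₂ := Int.bmod_le (x := a) hn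
  rcases abs_cases (a.bmod n) with h | h <;> omega

/-! ### Eisenstein integers -/

/-- The Eisenstein integers `ℤ[ω]`, with `ω ^ 2 = -1 - ω`. The coordinates `re` and `im` refer to
the basis `1, ω`. -/
abbrev EisensteinInt : Type := QuadraticAlgebra ℤ (-1) (-1)

namespace EisensteinInt

open QuadraticAlgebra

theorem norm_eq (x : EisensteinInt) : norm x = x.re ^ 2 - x.re * x.im + x.im ^ 2 := by
  rw [norm_def]; ring

theorem four_mul_norm (x : EisensteinInt) :
    4 * norm x = (2 * x.re - x.im) ^ 2 + 3 * x.im ^ 2 := by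
  rw [norm_eq]; ring

theorem four_mul_norm' (x : EisensteinInt) :
    4 * norm x = (x.re - 2 * x.im) ^ 2 + 3 * x.re ^ 2 := by
  rw [norm_eq]; ring

theorem norm_nonneg (x : EisensteinInt) : 0 ≤ norm x := by
  linarith [four_mul_norm x, sq_nonneg (2 * x.re - x.im), sq_nonneg x.im]

theorem norm_eq_zero_iff {x : EisensteinInt} : norm x = 0 ↔ x = 0 := by
  refine ⟨fun h => QuadraticAlgebra.ext ?_ ?_, by rintro rfl; exact norm_zero⟩
  · have := four_mul_norm' x
    exact pow_eq_zero_iff two_ne_zero |>.1 (by nlinarith [sq_nonneg (x.re - 2 * x.im)])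
  · have := four_mul_norm x
    exact pow_eq_zero_iff two_ne_zero |>.1 (by nlinarith [sq_nonneg (2 * x.re - x.im)])

theorem norm_pos {x : EisensteinInt} (hx : x ≠ 0) : 0 < norm x :=
  (norm_nonneg x).lt_of_ne fun h => hx (norm_eq_zero_iff.1 h.symm)

theorem intCast_norm (x : EisensteinInt) : ((norm x : ℤ) : EisensteinInt) = x * star x :=
  algebraMap_norm_eq_mul_star x

theorem isUnit_iff_norm_eq_one {x : EisensteinInt} : IsUnit x ↔ norm x = 1 := by
  rw [isUnit_iff_norm_isUnit, Int.isUnit_iff_natAbs_eq]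
  have := norm_nonneg x
  omega

theorem star_dvd_star {x y : EisensteinInt} : star x ∣ star y ↔ x ∣ y :=
  map_dvd_iff (starRingAut (R := EisensteinInt))

/-- The Eisenstein integer nearest to `x / y` in each coordinate. -/
def quotient (x y : EisensteinInt) : EisensteinInt :=
  ⟨(x * star y).re.bdiv (norm y).toNat, (x * star y).im.bdiv (norm y).toNat⟩

theorem norm_lt_sq_of_abs_le {x : EisensteinInt} {n : ℤ} (hn : 0 < n) (hre : 2 * |x.re| ≤ n)
    (him : 2 * |x.im| ≤ n) : norm x < n ^ 2 := by
  have h₁ := norm_eq x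
  have h₂ : -(x.re * x.im) ≤ |x.re| * |x.im| := by rw [← abs_mul]; exact neg_le_abs _
  nlinarith [sq_abs x.re, sq_abs x.im, abs_nonneg x.re, abs_nonneg x.im]

theorem sub_natCast_mul_bdiv (z : EisensteinInt) (n : ℕ) :
    z - n * ⟨z.re.bdiv n, z.im.bdiv n⟩ = ⟨z.re.bmod n, z.im.bmod n⟩ := by
  ext <;> simp [Int.bmod_eq_self_sub_mul_bdiv]

theorem norm_sub_mul_quotient_lt (x : EisensteinInt) {y : EisensteinInt} (hy : y ≠ 0) :
    norm (x - y * quotient x y) < norm y := by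
  have hpos := norm_pos hy
  set n := (norm y).toNat
  have hcast : (n : ℤ) = norm y := Int.toNat_of_nonneg hpos.le
  have hmod : (x - y * quotient x y) * star y =
      ⟨(x * star y).re.bmod n, (x * star y).im.bmod n⟩ := by
    rw [← sub_natCast_mul_bdiv, sub_mul, mul_right_comm, ← intCast_norm, ← hcast, Int.cast_natCast,
      quotient]
  have hlt : norm ((x - y * quotient x y) * star y) < norm y ^ 2 := by
    rw [hmod, ← hcast]
    exact norm_lt_sq_of_abs_le (by omega) (two_mul_abs_bmod_le _ (by omega))
      (two_mul_abs_bmod_le _ (by omega))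
  rw [map_mul, QuadraticAlgebra.norm_star, sq] at hlt
  exact lt_of_mul_lt_mul_right hlt hpos.le

instance : EuclideanDomain EisensteinInt where
  quotient := quotient
  quotient_zero x := by ext <;> simp [quotient]
  remainder x y := x - y * quotient x y
  quotient_mul_add_remainder_eq x y := by ring
  r := InvImage (· < ·) fun x => (norm x).natAbs
  r_wellFounded := InvImage.wf _ wellFounded_lt
  remainder_lt x y hy := by
    have := norm_sub_mul_quotient_lt x hy
    have := norm_nonneg (x - y * quotient x y)
    change (norm (x - y * quotient x y)).natAbs < (norm y).natAbs
    omega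
  mul_left_not_lt x y hy h := by
    have := norm_pos hy
    have h : (norm (x * y)).natAbs < (norm x).natAbs := h
    rw [map_mul, Int.natAbs_mul] at h
    exact absurd h (not_lt.2 (Nat.le_mul_of_pos_right _ (by omega)))

/-! ### Elements congruent to `1` modulo `√-3` -/

/-- Reduction modulo `√-3`: the ring homomorphism to `ℤ/3` sending `ω` to `1`. -/
def residue : EisensteinInt →+* ZMod 3 where
  toFun x := x.re + x.im
  map_zero' := by simp
  map_one' := by simp
  map_add' x y := by simp only [re_add, im_add]; push_cast; ring
  map_mul' x y := by
    have h : (3 : ZMod 3) = 0 := by decide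
    simp only [re_mul, im_mul]
    push_cast
    linear_combination (-x.im * y.im : ZMod 3) * h

theorem residue_apply (x : EisensteinInt) : residue x = x.re + x.im := rfl

theorem residue_star (x : EisensteinInt) : residue (star x) = residue x := by
  have h : (3 : ZMod 3) = 0 := by decide
  simp only [residue_apply, re_star, im_star]
  push_cast
  linear_combination (-x.im : ZMod 3) * h

/-- The Eisenstein integers congruent to `1` modulo `√-3`. (This is weaker than the classical
notion, which is a congruence modulo `3`.) -/
def primary : Submonoid EisensteinInt := MonoidHom.mker residue

theorem mem_primary {x : EisensteinInt} : x ∈ primary ↔ residue x = 1 := Iff.rfl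

theorem mem_primary_iff_emod {x : EisensteinInt} : x ∈ primary ↔ (x.re + x.im) % 3 = 1 := by
  have h := ZMod.intCast_eq_intCast_iff' (x.re + x.im) 1 3
  rwa [Int.cast_add, Int.cast_one] at h

theorem star_mem_primary {x : EisensteinInt} (hx : x ∈ primary) : star x ∈ primary := by
  rwa [mem_primary, residue_star]

theorem mul_mem_primary_iff {x y : EisensteinInt} (hx : x ∈ primary) :
    x * y ∈ primary ↔ y ∈ primary := by
  rw [mem_primary, map_mul, mem_primary.1 hx, one_mul, mem_primary]

theorem mem_or_neg_mem_primary {x : EisensteinInt} (hx : residue x ≠ 0) :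
    x ∈ primary ∨ -x ∈ primary := by
  simp only [mem_primary, map_neg]
  generalize residue x = r at *
  revert r
  decide

theorem dvd_or_star_dvd_of_dvd_norm {π x : EisensteinInt} (hπ : Prime π)
    (h : π ∣ (norm x : ℤ)) : π ∣ x ∨ star π ∣ x := by
  rw [intCast_norm] at h
  refine (hπ.dvd_or_dvd h).imp_right fun h => ?_
  rwa [← star_dvd_star, star_star]

theorem ne_zero_of_mem_primary {x : EisensteinInt} (hx : x ∈ primary) : x ≠ 0 := by
  rintro rfl
  exact zero_ne_one ((map_zero residue).symm.trans hx)

theorem exists_mem_primary_prime_dvd {x : EisensteinInt} (hx : x ∈ primary) (hu : ¬ IsUnit x) :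
    ∃ π ∈ primary, Prime π ∧ π ∣ x := by
  obtain ⟨π, hπ, hdvd⟩ :=
    WfDvdMonoid.exists_irreducible_factor hu (ne_zero_of_mem_primary hx)
  have hres : residue π ≠ 0 := by
    have h : residue π ∣ 1 := mem_primary.1 hx ▸ map_dvd residue hdvd
    exact (isUnit_of_dvd_one h).ne_zero
  rcases mem_or_neg_mem_primary hres with h | h
  · exact ⟨π, h, hπ.prime, hdvd⟩
  · exact ⟨-π, h, hπ.prime.neg, neg_dvd.2 hdvd⟩

theorem abs_re_le (x : EisensteinInt) : |x.re| ≤ 2 * norm x := by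
  linarith [Int.le_self_sq |x.re|, sq_abs x.re,
    four_mul_norm' x, sq_nonneg (x.re - 2 * x.im), sq_nonneg x.re]

theorem abs_im_le (x : EisensteinInt) : |x.im| ≤ 2 * norm x := by
  linarith [Int.le_self_sq |x.im|, sq_abs x.im,
    four_mul_norm x, sq_nonneg (2 * x.re - x.im), sq_nonneg x.im]

theorem finite_setOf_norm_eq (n : ℤ) : {x : EisensteinInt | norm x = n}.Finite := by
  have hbox := ((Set.finite_Icc (-(2 * n)) (2 * n)).prod (Set.finite_Icc (-(2 * n)) (2 * n)))
  refine (hbox.preimage (equivProd (-1 : ℤ) (-1)).injective.injOn).subset ?_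
  rintro x rfl
  exact ⟨abs_le.1 (abs_re_le x), abs_le.1 (abs_im_le x)⟩

/-- The primary Eisenstein integers of norm `n`. -/
noncomputable def primaryOfNorm (n : ℤ) : Finset EisensteinInt :=
  ((finite_setOf_norm_eq n).inter_of_right primary).toFinset

theorem mem_primaryOfNorm {n : ℤ} {x : EisensteinInt} :
    x ∈ primaryOfNorm n ↔ x ∈ primary ∧ norm x = n := by
  simp [primaryOfNorm]

theorem mul_mem_primaryOfNorm_iff {α y : EisensteinInt} {m : ℤ} (hα : α ∈ primary) :
    α * y ∈ primaryOfNorm (norm α * m) ↔ y ∈ primaryOfNorm m := by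
  rw [mem_primaryOfNorm, mem_primaryOfNorm, mul_mem_primary_iff hα, map_mul,
    mul_right_inj' (norm_pos (ne_zero_of_mem_primary hα)).ne']

open Classical in
theorem sum_filter_dvd {M : Type*} [AddCommMonoid M] {α : EisensteinInt} (hα : α ∈ primary)
    (m : ℤ) (f : EisensteinInt → M) :
    ∑ x ∈ primaryOfNorm (norm α * m) with α ∣ x, f x = ∑ y ∈ primaryOfNorm m, f (α * y) := by
  have himage : (primaryOfNorm (norm α * m)).filter (α ∣ ·) =
      (primaryOfNorm m).image (α * ·) := by
    ext x
    simp only [Finset.mem_filter, Finset.mem_image]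
    constructor
    · rintro ⟨hx, y, rfl⟩
      exact ⟨y, (mul_mem_primaryOfNorm_iff hα).1 hx, rfl⟩
    · rintro ⟨y, hy, rfl⟩
      exact ⟨(mul_mem_primaryOfNorm_iff hα).2 hy, dvd_mul_right α y⟩
  rw [himage, Finset.sum_image (mul_right_injective₀ (ne_zero_of_mem_primary hα)).injOn]

/-- The sum of the `e`-th powers of the primary Eisenstein integers of norm `n`. -/
noncomputable def primaryPowSum (e : ℕ) (n : ℤ) : EisensteinInt := ∑ x ∈ primaryOfNorm n, x ^ e

open Classical in
theorem sum_pow_filter_dvd {α : EisensteinInt} (hα : α ∈ primary) (e : ℕ) (m : ℤ) :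
    ∑ x ∈ primaryOfNorm (norm α * m) with α ∣ x, x ^ e = α ^ e * primaryPowSum e m := by
  simp_rw [sum_filter_dvd hα, mul_pow, primaryPowSum, Finset.mul_sum]

theorem primaryPowSum_norm_mul_of_dvd_star {π : EisensteinInt} (hπ : Prime π) (hP : π ∈ primary)
    (hstar : π ∣ star π) (e : ℕ) (m : ℤ) :
    primaryPowSum e (norm π * m) = π ^ e * primaryPowSum e m := by
  classical
  rw [← sum_pow_filter_dvd hP, Finset.filter_true_of_mem, primaryPowSum]
  intro x hx
  have hdvd : π ∣ ((norm x : ℤ) : EisensteinInt) := by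
    rw [(mem_primaryOfNorm.1 hx).2, Int.cast_mul, intCast_norm]
    exact (dvd_mul_right _ _).mul_right _
  exact (dvd_or_star_dvd_of_dvd_norm hπ hdvd).elim id hstar.trans

section Split

variable {π : EisensteinInt} (hπ : Prime π)
include hπ

theorem star_pow_dvd_of_not_dvd {k : ℕ} {m : ℤ} {x : EisensteinInt}
    (hx : norm x = norm π ^ k * m) (hdvd : ¬ π ∣ x) : star π ^ k ∣ x := by
  induction k generalizing x with
  | zero => exact pow_zero (star π) ▸ one_dvd x
  | succ k ih =>
    have hnorm : π ∣ ((norm x : ℤ) : EisensteinInt) := by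
      rw [hx, pow_succ', mul_assoc, Int.cast_mul, intCast_norm π, mul_assoc]
      exact dvd_mul_right _ _
    obtain ⟨y, rfl⟩ := (dvd_or_star_dvd_of_dvd_norm hπ hnorm).resolve_left hdvd
    rw [map_mul, QuadraticAlgebra.norm_star, pow_succ', mul_assoc] at hx
    rw [pow_succ']
    exact mul_dvd_mul_left _ (ih (mul_left_cancel₀ (norm_pos hπ.ne_zero).ne' hx)
      fun h => hdvd (h.mul_left _))

theorem not_dvd_iff_star_pow_dvd (hstar : ¬ π ∣ star π) {k : ℕ} {m : ℤ} (hm : ¬ norm π ∣ m)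
    {x : EisensteinInt} (hx : norm x = norm π ^ k * m) : ¬ π ∣ x ↔ star π ^ k ∣ x := by
  refine ⟨star_pow_dvd_of_not_dvd hπ hx, ?_⟩
  rintro ⟨y, rfl⟩ hdvd
  have hy : π ∣ y := (hπ.dvd_or_dvd hdvd).resolve_left fun h => hstar (hπ.dvd_of_dvd_pow h)
  rw [map_mul, map_pow, QuadraticAlgebra.norm_star] at hx
  rw [← mul_left_cancel₀ (pow_ne_zero k (norm_pos hπ.ne_zero).ne') hx] at hm
  exact hm (map_dvd QuadraticAlgebra.norm hy)

variable (hP : π ∈ primary)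
include hP

theorem primaryPowSum_norm_pow_succ_mul (hstar : ¬ π ∣ star π) {m : ℤ} (hm : ¬ norm π ∣ m)
    (e k : ℕ) :
    primaryPowSum e (norm π ^ (k + 1) * m) =
      π ^ e * primaryPowSum e (norm π ^ k * m) +
        (star π ^ (k + 1)) ^ e * primaryPowSum e m := by
  classical
  have hcomm : norm π ^ (k + 1) * m = norm π * (norm π ^ k * m) := by ring
  have hsP : star π ^ (k + 1) ∈ primary := pow_mem (star_mem_primary hP) _
  have hnorm : norm (star π ^ (k + 1)) = norm π ^ (k + 1) := by
    rw [map_pow, QuadraticAlgebra.norm_star]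
  rw [← sum_pow_filter_dvd hP, ← sum_pow_filter_dvd hsP, hnorm, ← hcomm, primaryPowSum,
    ← Finset.sum_filter_add_sum_filter_not _ (π ∣ ·)]
  congr 2
  exact Finset.filter_congr fun x hx =>
    not_dvd_iff_star_pow_dvd hπ hstar hm (mem_primaryOfNorm.1 hx).2

/-- Modulo `π` only the summands divisible by `star π ^ k` survive, so the factor is congruent to
a power of `star π`. -/
theorem exists_primaryPowSum_norm_pow_mul_eq (hstar : ¬ π ∣ star π) {m : ℤ} (hm : ¬ norm π ∣ m)
    {e : ℕ} (he : e ≠ 0) (k : ℕ) :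
    ∃ s, primaryPowSum e (norm π ^ k * m) = s * primaryPowSum e m ∧ ¬ π ∣ s := by
  induction k with
  | zero => exact ⟨1, by simp, fun h => hπ.not_isUnit (isUnit_of_dvd_one h)⟩
  | succ k ih =>
    obtain ⟨s, hs, -⟩ := ih
    refine ⟨π ^ e * s + (star π ^ (k + 1)) ^ e, ?_, fun h => hstar ?_⟩
    · rw [primaryPowSum_norm_pow_succ_mul hπ hP hstar hm, hs]; ring
    · rw [dvd_add_right ((dvd_pow_self π he).mul_right s), ← pow_mul] at h
      exact hπ.dvd_of_dvd_pow h

theorem exists_norm_eq_of_norm_eq_norm_pow_mul {k : ℕ} {m : ℤ} {x : EisensteinInt}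
    (hx : x ∈ primary) (hxm : norm x = norm π ^ k * m) : ∃ z ∈ primary, norm z = m := by
  induction k generalizing x with
  | zero => exact ⟨x, hx, by rw [hxm, pow_zero, one_mul]⟩
  | succ k ih =>
    have hnorm : π ∣ ((norm x : ℤ) : EisensteinInt) := by
      rw [hxm, pow_succ', mul_assoc, Int.cast_mul, intCast_norm π, mul_assoc]
      exact dvd_mul_right _ _
    have hπ0 := (norm_pos hπ.ne_zero).ne'
    rw [pow_succ', mul_assoc] at hxm
    rcases dvd_or_star_dvd_of_dvd_norm hπ hnorm with ⟨y, rfl⟩ | ⟨y, rfl⟩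
    · rw [map_mul] at hxm
      exact ih ((mul_mem_primary_iff hP).1 hx) (mul_left_cancel₀ hπ0 hxm)
    · rw [map_mul, QuadraticAlgebra.norm_star] at hxm
      exact ih ((mul_mem_primary_iff (star_mem_primary hP)).1 hx) (mul_left_cancel₀ hπ0 hxm)

theorem exists_norm_eq_norm_pow_mul {x : EisensteinInt} (hx : x ∈ primary) :
    ∃ k, ∃ z ∈ primary, norm x = norm π ^ k * norm z ∧ ¬ norm π ∣ norm z := by
  have hfin : FiniteMultiplicity (norm π) (norm x) := by
    refine Int.finiteMultiplicity_iff.2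
      ⟨fun h => hπ.not_isUnit ?_, (norm_pos (ne_zero_of_mem_primary hx)).ne'⟩
    rwa [isUnit_iff_norm_isUnit, Int.isUnit_iff_natAbs_eq]
  obtain ⟨m, hxm, hm⟩ := hfin.exists_eq_pow_mul_and_not_dvd
  obtain ⟨z, hz, rfl⟩ := exists_norm_eq_of_norm_eq_norm_pow_mul hπ hP hx hxm
  exact ⟨_, z, hz, hxm, hm⟩

end Split

theorem pow_three_eq_one {x : EisensteinInt} (hx : x ∈ primary) (hnorm : norm x = 1) :
    x ^ 3 = 1 := by
  have hmod := mem_primary_iff_emod.1 hx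
  have hre := abs_re_le x
  have him := abs_im_le x
  rw [hnorm, mul_one, abs_le] at hre him
  rw [norm_eq] at hnorm
  obtain ⟨a, b⟩ := x
  obtain ⟨ha₁, ha₂⟩ := hre
  obtain ⟨hb₁, hb₂⟩ := him
  dsimp only at *
  interval_cases a <;> interval_cases b <;> first | omega | rfl

theorem primaryPowSum_one_ne_zero {e : ℕ} (he : 3 ∣ e) : primaryPowSum e 1 ≠ 0 := by
  have hone : ∀ x ∈ primaryOfNorm 1, x ^ e = 1 := fun x hx => by
    obtain ⟨hxP, hnorm⟩ := mem_primaryOfNorm.1 hx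
    obtain ⟨d, rfl⟩ := he
    rw [pow_mul, pow_three_eq_one hxP hnorm, one_pow]
  have hmem : (1 : EisensteinInt) ∈ primaryOfNorm 1 :=
    mem_primaryOfNorm.2 ⟨one_mem _, QuadraticAlgebra.norm_one⟩
  rw [primaryPowSum, Finset.sum_congr rfl hone, Finset.sum_const, nsmul_one, Nat.cast_ne_zero]
  exact Finset.card_ne_zero_of_mem hmem

theorem norm_lt_norm_mul {x y : EisensteinInt} (hx : ¬ IsUnit x) (hxy : x * y ≠ 0) :
    norm y < norm (x * y) := by
  have h₁ := norm_pos (left_ne_zero_of_mul hxy)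
  have h₂ := norm_pos (right_ne_zero_of_mul hxy)
  have h₃ : norm x ≠ 1 := mt isUnit_iff_norm_eq_one.2 hx
  rw [map_mul]
  nlinarith [show 2 ≤ norm x by omega]

theorem primaryPowSum_norm_ne_zero {e : ℕ} (he : 3 ∣ e) (he0 : e ≠ 0) {x : EisensteinInt}
    (hx : x ∈ primary) : primaryPowSum e (norm x) ≠ 0 := by
  induction h : (norm x).natAbs using Nat.strong_induction_on generalizing x with
  | _ n ih =>
  subst h
  by_cases hu : IsUnit x
  · rw [isUnit_iff_norm_eq_one.1 hu]
    exact primaryPowSum_one_ne_zero he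
  obtain ⟨π, hP, hπ, y, rfl⟩ := exists_mem_primary_prime_dvd hx hu
  by_cases hstar : π ∣ star π
  · rw [map_mul, primaryPowSum_norm_mul_of_dvd_star hπ hP hstar]
    have := norm_lt_norm_mul hπ.not_isUnit (ne_zero_of_mem_primary hx)
    have := norm_nonneg y
    exact mul_ne_zero (pow_ne_zero e hπ.ne_zero)
      (ih _ (by omega) ((mul_mem_primary_iff hP).1 hx) rfl)
  · obtain ⟨k, z, hz, hxz, hndvd⟩ := exists_norm_eq_norm_pow_mul hπ hP hx
    obtain ⟨s, hs, hπs⟩ := exists_primaryPowSum_norm_pow_mul_eq hπ hP hstar hndvd he0 k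
    rw [hxz, hs]
    have hk : k ≠ 0 := by
      rintro rfl
      rw [pow_zero, one_mul] at hxz
      exact hndvd (hxz ▸ map_dvd QuadraticAlgebra.norm (dvd_mul_right π y))
    have hlt : norm z < norm (π * y) := by
      rw [hxz, ← map_pow, ← map_mul]
      exact norm_lt_norm_mul (mt (isUnit_pow_iff hk).1 hπ.not_isUnit)
        (mul_ne_zero (pow_ne_zero k hπ.ne_zero) (ne_zero_of_mem_primary hz))
    have := norm_nonneg z
    exact mul_ne_zero (fun h => hπs (h ▸ dvd_zero π)) (ih _ (by omega) hz rfl)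

theorem star_primaryPowSum (e : ℕ) (n : ℤ) : star (primaryPowSum e n) = primaryPowSum e n := by
  have hmem : ∀ x ∈ primaryOfNorm n, star x ∈ primaryOfNorm n := fun x hx => by
    obtain ⟨hxP, hnorm⟩ := mem_primaryOfNorm.1 hx
    exact mem_primaryOfNorm.2 ⟨star_mem_primary hxP, by rw [QuadraticAlgebra.norm_star, hnorm]⟩
  rw [primaryPowSum, star_sum]
  exact Finset.sum_nbij' star star hmem hmem (fun x _ => star_star x) (fun x _ => star_star x)
    fun x _ => star_pow x e

theorem trace_ne_zero_of_star_eq {x : EisensteinInt} (hstar : star x = x) (hx : x ≠ 0) :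
    trace x ≠ 0 := by
  have him := congrArg QuadraticAlgebra.im hstar
  rw [im_star] at him
  intro htrace
  rw [trace_def] at htrace
  exact hx (QuadraticAlgebra.ext (by rw [re_zero]; omega) (by rw [im_zero]; omega))

/-- The primary Eisenstein integers of norm `n` with argument strictly between `-π/6` and `π/2`.
This sector is a fundamental domain for multiplication by `ω`, with no primary element on its
boundary. -/
noncomputable def sector (n : ℤ) : Finset EisensteinInt :=
  (primaryOfNorm n).filter fun x => 0 < x.re + x.im ∧ 0 < 2 * x.re - x.im

theorem mem_sector {n : ℤ} {x : EisensteinInt} :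
    x ∈ sector n ↔ x ∈ primaryOfNorm n ∧ 0 < x.re + x.im ∧ 0 < 2 * x.re - x.im :=
  Finset.mem_filter

theorem omega_mem_primary : (ω : EisensteinInt) ∈ primary :=
  mem_primary_iff_emod.2 rfl

theorem omega_pow_three : (ω : EisensteinInt) ^ 3 = 1 := by
  decide

theorem omega_mul_mem_primaryOfNorm_iff {n : ℤ} {x : EisensteinInt} :
    ω * x ∈ primaryOfNorm n ↔ x ∈ primaryOfNorm n := by
  have h : norm (ω : EisensteinInt) = 1 := by decide
  have := mul_mem_primaryOfNorm_iff (y := x) (m := n) omega_mem_primary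
  rwa [h, one_mul] at this

theorem sum_omega_mul {M : Type*} [AddCommMonoid M] (n : ℤ) (f : EisensteinInt → M) :
    ∑ x ∈ primaryOfNorm n, f (ω * x) = ∑ x ∈ primaryOfNorm n, f x := by
  have hω : IsUnit (ω : EisensteinInt) := .of_pow_eq_one omega_pow_three three_ne_zero
  exact Finset.sum_equiv hω.unit.mulLeft (fun _ => omega_mul_mem_primaryOfNorm_iff.symm)
    fun _ _ => rfl

theorem sum_primaryOfNorm_eq_three_nsmul {M : Type*} [AddCommMonoid M] (n : ℤ)
    {f : EisensteinInt → M} (hf : ∀ x, f (ω * x) = f x) :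
    ∑ x ∈ primaryOfNorm n, f x = 3 • ∑ x ∈ sector n, f x := by
  let g (x : EisensteinInt) : M := if 0 < x.re + x.im ∧ 0 < 2 * x.re - x.im then f x else 0
  have hg : ∀ x ∈ primaryOfNorm n, f x = g (ω * (ω * x)) + g (ω * x) + g x := fun x hx => by
    have hmod := mem_primary_iff_emod.1 (mem_primaryOfNorm.1 hx).1
    simp only [g, hf, re_mul, im_mul, omega_re, omega_im]
    split_ifs <;> first | omega | simp
  calc ∑ x ∈ primaryOfNorm n, f x
      = ∑ x ∈ primaryOfNorm n, (g (ω * (ω * x)) + g (ω * x) + g x) := Finset.sum_congr rfl hg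
    _ = 3 • ∑ x ∈ primaryOfNorm n, g x := by
      rw [Finset.sum_add_distrib, Finset.sum_add_distrib, sum_omega_mul n fun x => g (ω * x),
        sum_omega_mul, succ_nsmul, two_nsmul]
    _ = 3 • ∑ x ∈ sector n, f x := by rw [sector, Finset.sum_filter]

theorem sum_sector_trace_pow_ne_zero {e : ℕ} (he : 3 ∣ e) (he0 : e ≠ 0) {x : EisensteinInt}
    (hx : x ∈ primary) : ∑ y ∈ sector (norm x), trace (y ^ e) ≠ 0 := by
  have hne := trace_ne_zero_of_star_eq (star_primaryPowSum e _)
    (primaryPowSum_norm_ne_zero he he0 hx)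
  have hω (y : EisensteinInt) : trace ((ω * y) ^ e) = trace (y ^ e) := by
    obtain ⟨d, rfl⟩ := he
    rw [mul_pow, pow_mul ω, omega_pow_three, one_pow, one_mul]
  rw [primaryPowSum, map_sum, sum_primaryOfNorm_eq_three_nsmul _ hω] at hne
  exact fun h => hne (by rw [h, smul_zero])

end EisensteinInt

/-! ### Abaci with two runners -/

/-- A finite set of positive integers `s`, read as the hook lengths in the first column of a Young
diagram, determines the diagram; `prependColumn c s` is the corresponding set for the diagram with
a further column, longer by `c`, put in front. -/
def prependColumn (c : ℕ) (s : Finset ℕ) : Finset ℕ :=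
  Finset.Icc 1 c ∪ s.image (· + (c + 1))

theorem mem_prependColumn {c b : ℕ} {s : Finset ℕ} :
    b ∈ prependColumn c s ↔ (1 ≤ b ∧ b ≤ c) ∨ (c + 1 ≤ b ∧ b - (c + 1) ∈ s) := by
  simp only [prependColumn, Finset.mem_union, Finset.mem_Icc, Finset.mem_image]
  refine or_congr_right ⟨?_, fun h => ⟨_, h.2, by omega⟩⟩
  rintro ⟨a, ha, rfl⟩
  exact ⟨by omega, by rwa [Nat.add_sub_cancel]⟩

theorem prependColumn_inj {c d : ℕ} {s t : Finset ℕ} (hs : 0 ∉ s) (ht : 0 ∉ t) :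
    prependColumn c s = prependColumn d t ↔ c = d ∧ s = t := by
  refine ⟨fun h => ?_, fun ⟨hc, hst⟩ => hc ▸ hst ▸ rfl⟩
  have hmem (b : ℕ) := congrArg (b ∈ ·) h
  simp only [mem_prependColumn, eq_iff_iff] at hmem
  have hcd : c = d := by
    have hc := hmem (c + 1)
    have hd := hmem (d + 1)
    rw [Nat.sub_self] at hc hd
    have hc' : ¬ (c + 1 ≤ c) := by omega
    have hd' : ¬ (d + 1 ≤ d) := by omega
    simp only [hs, hc', and_false, or_false, false_iff] at hc
    simp only [ht, hd', and_false, or_false, iff_false] at hd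
    omega
  subst hcd
  refine ⟨rfl, Finset.ext fun b => ?_⟩
  have hb := hmem (b + (c + 1))
  have h₁ : ¬ (b + (c + 1) ≤ c) := by omega
  have h₂ : c + 1 ≤ b + (c + 1) := by omega
  simpa only [h₁, h₂, and_false, false_or, true_and, Nat.add_sub_cancel] using hb

/-- The first-column hook lengths of the `3`-core with runner lengths `v`: the numbers congruent to
`1` or to `2` modulo `3` fill initial segments of their residue classes, of lengths `v.1` and
`v.2`. -/
def abacusBeads (v : ℕ × ℕ) : Finset ℕ :=
  (Finset.range v.1).image (fun i => 3 * i + 1) ∪ (Finset.range v.2).image (fun i => 3 * i + 2)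

theorem mem_abacusBeads {v : ℕ × ℕ} {b : ℕ} :
    b ∈ abacusBeads v ↔ (b % 3 = 1 ∧ b < 3 * v.1) ∨ (b % 3 = 2 ∧ b < 3 * v.2) := by
  simp only [abacusBeads, Finset.mem_union, Finset.mem_image, Finset.mem_range]
  constructor
  · rintro (⟨i, hi, rfl⟩ | ⟨i, hi, rfl⟩) <;> omega
  · rintro (h | h)
    · exact Or.inl ⟨b / 3, by omega, by omega⟩
    · exact Or.inr ⟨b / 3, by omega, by omega⟩

theorem not_three_dvd_of_mem_abacusBeads {v : ℕ × ℕ} {b : ℕ} (hb : b ∈ abacusBeads v) :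
    ¬ 3 ∣ b := by
  rw [mem_abacusBeads] at hb
  omega

@[to_additive]
theorem prod_abacusBeads {M : Type*} [CommMonoid M] (v : ℕ × ℕ) (f : ℕ → M) :
    ∏ b ∈ abacusBeads v, f b =
      (∏ i ∈ Finset.range v.1, f (3 * i + 1)) * ∏ i ∈ Finset.range v.2, f (3 * i + 2) := by
  have hdisj : Disjoint ((Finset.range v.1).image (fun i => 3 * i + 1))
      ((Finset.range v.2).image (fun i => 3 * i + 2)) := by
    simp only [Finset.disjoint_left, Finset.mem_image]
    omega
  rw [abacusBeads, Finset.prod_union hdisj, Finset.prod_image fun _ _ _ _ h => by omega,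
    Finset.prod_image fun _ _ _ _ h => by omega]

theorem card_abacusBeads (v : ℕ × ℕ) : (abacusBeads v).card = v.1 + v.2 := by
  rw [Finset.card_eq_sum_ones, sum_abacusBeads, Finset.sum_const, Finset.sum_const,
    Finset.card_range, Finset.card_range, smul_eq_mul, smul_eq_mul, mul_one, mul_one]

/-- The lengths of the two runners of the abacus with bead set `s`. -/
def runnerLengths (s : Finset ℕ) : ℕ × ℕ :=
  ((s.filter (· % 3 = 1)).card, (s.filter (· % 3 = 2)).card)

theorem runnerLengths_abacusBeads (v : ℕ × ℕ) : runnerLengths (abacusBeads v) = v := by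
  simp only [runnerLengths, Finset.card_filter, sum_abacusBeads]
  ext <;> simp [Nat.add_mod]

/-- The effect on the runner lengths of a `3`-core of removing its first column. -/
def abacusStep : ℕ × ℕ → ℕ × ℕ
  | (0, y) => (y, 0)
  | (x + 1, 0) => (0, x)
  | (x + 1, y + 1) => (x, y)

theorem abacusBeads_eq_prependColumn (v : ℕ × ℕ) :
    abacusBeads v = prependColumn
      (v.1 + v.2 - ((abacusStep v).1 + (abacusStep v).2)) (abacusBeads (abacusStep v)) := by
  obtain ⟨_ | x, _ | y⟩ := v <;> ext b <;>
    simp only [mem_prependColumn, mem_abacusBeads, abacusStep] <;> omega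

theorem exists_prependColumn_abacusBeads_eq {v : ℕ × ℕ} {c : ℕ}
    (h : 3 ∉ prependColumn c (abacusBeads v)) :
    ∃ w, prependColumn c (abacusBeads v) = abacusBeads w := by
  obtain ⟨x, y⟩ := v
  simp only [mem_prependColumn, mem_abacusBeads] at h
  have hc : (c = 0 ∧ y = 0) ∨ (c = 1 ∧ x = 0) ∨ c = 2 := by omega
  rcases hc with ⟨rfl, rfl⟩ | ⟨rfl, rfl⟩ | rfl
  · exact ⟨(0, x), by rw [abacusBeads_eq_prependColumn (0, x)]; simp [abacusStep]⟩
  · exact ⟨(y + 1, 0), by rw [abacusBeads_eq_prependColumn (y + 1, 0)]; simp [abacusStep]⟩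
  · refine ⟨(x + 1, y + 1), ?_⟩
    rw [abacusBeads_eq_prependColumn (x + 1, y + 1)]
    simp only [abacusStep]
    congr 1
    omega

theorem add_abacusStep_le (v : ℕ × ℕ) :
    (abacusStep v).1 + (abacusStep v).2 ≤ v.1 + v.2 := by
  obtain ⟨_ | x, _ | y⟩ := v <;> simp only [abacusStep] <;> omega

theorem antitone_add_iterate_abacusStep (v : ℕ × ℕ) :
    Antitone fun k => (abacusStep^[k] v).1 + (abacusStep^[k] v).2 :=
  antitone_nat_of_succ_le fun k => by
    rw [Function.iterate_succ_apply']
    exact add_abacusStep_le _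

/-- The size of the `3`-core with runner lengths `v`. -/
def abacusSize (v : ℕ × ℕ) : ℤ :=
  v.1 ^ 2 + v.2 ^ 2 - v.1 * v.2 + v.2

theorem abacusSize_eq (v : ℕ × ℕ) :
    abacusSize v = (v.1 + v.2 : ℕ) + abacusSize (abacusStep v) := by
  obtain ⟨_ | x, _ | y⟩ := v <;> simp only [abacusStep, abacusSize] <;> push_cast <;> ring

theorem exists_iterate_abacusStep_eq_zero (v : ℕ × ℕ) : ∃ n, abacusStep^[n] v = (0, 0) := by
  induction h : 2 * (v.1 + v.2) + (1 - v.1) using Nat.strong_induction_on generalizing v with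
  | _ m ih =>
  by_cases hv : v = (0, 0)
  · exact ⟨0, hv⟩
  · have hlt : 2 * ((abacusStep v).1 + (abacusStep v).2) + (1 - (abacusStep v).1) < m := by
      subst h
      obtain ⟨_ | x, _ | y⟩ := v
      · exact absurd rfl hv
      all_goals simp only [abacusStep]; omega
    obtain ⟨n, hn⟩ := ih _ hlt (abacusStep v) rfl
    exact ⟨n + 1, by rwa [Function.iterate_succ_apply]⟩

/-- The product of `1 - 9 / h ^ 2` over the hook lengths of the `3`-core with runner lengths `v`. -/
def abacusWeight (v : ℕ × ℕ) : ℚ :=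
  (3 * v.1 + 1) * (3 * v.2 + 2) * (3 * v.2 + 1 - 3 * v.1) / 2

theorem three_mul_add_sub_three_ne_zero {r : ℕ} (hr : ¬ 3 ∣ r) (n : ℕ) :
    3 * (n : ℚ) + r - 3 ≠ 0 := fun h => by
  have : (3 * n + r : ℤ) = 3 := by exact_mod_cast sub_eq_zero.1 h
  omega

theorem prod_range_one_sub_nine_div_sq {r : ℕ} (hr : ¬ 3 ∣ r) (n : ℕ) :
    ∏ i ∈ Finset.range n, (1 - 9 / ((3 * i + r : ℕ) : ℚ) ^ 2) =
      ((r : ℚ) - 3) * (3 * n + r) / (r * (3 * n + r - 3)) := by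
  rw [← prod_range_one_sub_sq_div_sq (three_mul_add_sub_three_ne_zero hr)]
  push_cast
  norm_num

theorem abacusWeight_eq (v : ℕ × ℕ) :
    abacusWeight v =
      (∏ b ∈ abacusBeads v, (1 - 9 / (b : ℚ) ^ 2)) * abacusWeight (abacusStep v) := by
  have h₁ := three_mul_add_sub_three_ne_zero (r := 1) (by decide) v.1
  have h₂ := three_mul_add_sub_three_ne_zero (r := 2) (by decide) v.2
  rw [prod_abacusBeads, prod_range_one_sub_nine_div_sq (by decide),
    prod_range_one_sub_nine_div_sq (by decide)]
  obtain ⟨_ | x, _ | y⟩ := v <;> simp only [abacusStep, abacusWeight] at * <;>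
    push_cast at * <;> field_simp <;> ring

/-! ### Column lengths and hook lengths -/

theorem colLen_antitone {N : ℕ} (p : N.Partition) : Antitone (colLen p) := fun _ _ h =>
  Multiset.card_le_card (Multiset.monotone_filter_right _ fun _ h' => h.trans_lt h')

theorem colLen_eq_zero {N : ℕ} (p : N.Partition) {j : ℕ} (hj : N ≤ j) : colLen p j = 0 := by
  rw [colLen, Multiset.card_eq_zero, Multiset.filter_eq_nil]
  exact fun a ha => (p.le_of_mem_parts ha |>.trans hj).not_gt

theorem sum_colLen {N : ℕ} (p : N.Partition) : ∑ j ∈ Finset.range N, colLen p j = N :=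
  (sum_card_filter_lt fun _ => p.le_of_mem_parts).trans p.parts_sum

theorem colLen_le {N : ℕ} (p : N.Partition) (j : ℕ) : colLen p j ≤ N := by
  rcases lt_or_ge j N with h | h
  · calc colLen p j ≤ ∑ j ∈ Finset.range N, colLen p j :=
          Finset.single_le_sum (fun _ _ => Nat.zero_le _) (Finset.mem_range.2 h)
      _ = N := sum_colLen p
  · exact (colLen_eq_zero p h).trans_le (Nat.zero_le N)

theorem colLen_injective {N : ℕ} : Function.Injective (colLen (N := N)) := by
  intro p q h
  refine Nat.Partition.ext (Multiset.ext.2 fun a => ?_)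
  cases a with
  | zero =>
    rw [Multiset.count_eq_zero_of_notMem fun h => (p.parts_pos h).ne rfl,
      Multiset.count_eq_zero_of_notMem fun h => (q.parts_pos h).ne rfl]
  | succ j =>
    have hp : colLen p j = _ + colLen p (j + 1) := card_filter_lt_eq_count_add p.parts j
    have hq : colLen q j = _ + colLen q (j + 1) := card_filter_lt_eq_count_add q.parts j
    rw [h] at hp
    omega

theorem exists_colLen_eq {N n : ℕ} {f : ℕ → ℕ} (hf : Antitone f) (hn : f n = 0)
    (hsum : ∑ j ∈ Finset.range n, f j = N) : ∃ p : N.Partition, ∀ j, colLen p j = f j := by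
  let s : Multiset ℕ :=
    (Multiset.range (f 0)).map fun i => ((Finset.range n).filter fun k => i < f k).card
  have hs (j : ℕ) : (s.filter (j < ·)).card = f j := by
    simp only [s, Multiset.filter_map, Multiset.card_map, Function.comp_def,
      lt_card_filter_range_iff hf hn]
    have hrange : (Finset.range (f 0)).filter (· < f j) = Finset.range (f j) := by
      ext i
      simp only [Finset.mem_filter, Finset.mem_range, and_iff_right_iff_imp]
      exact fun hi => hi.trans_le (hf j.zero_le)
    exact (congrArg Finset.card hrange).trans (Finset.card_range _)
  have hpos : ∀ a ∈ s, 0 < a := fun a ha => by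
    obtain ⟨i, hi, rfl⟩ := Multiset.mem_map.1 ha
    exact (lt_card_filter_range_iff hf hn).2 (Multiset.mem_range.1 hi)
  have hle : ∀ a ∈ s, a ≤ n := fun a ha => by
    obtain ⟨i, -, rfl⟩ := Multiset.mem_map.1 ha
    exact (Finset.card_filter_le _ _).trans_eq (Finset.card_range n)
  have hsum' : s.sum = N := by rw [← sum_card_filter_lt hle, ← hsum]; simp only [hs]
  exact ⟨⟨s, fun {a} ha => hpos a ha, hsum'⟩, hs⟩

theorem lt_rowLen {N : ℕ} (p : N.Partition) {i j : ℕ} : j < rowLen p i ↔ i < colLen p j :=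
  lt_card_filter_range_iff (colLen_antitone p) (colLen_eq_zero p le_rfl)

theorem rowLen_antitone {N : ℕ} (p : N.Partition) : Antitone (rowLen p) := fun _ _ h =>
  Finset.card_le_card (Finset.monotone_filter_right _ fun _ _ h' => h.trans_lt h')

/-- The hook lengths of `p` in the `j`-th column, a set since they decrease down the column. -/
def colHooks {N : ℕ} (p : N.Partition) (j : ℕ) : Finset ℕ :=
  (Finset.range (colLen p j)).image fun i => rowLen p i + colLen p j - i - j - 1

theorem colHook_injOn {N : ℕ} (p : N.Partition) (j : ℕ) :
    Set.InjOn (fun i => rowLen p i + colLen p j - i - j - 1) (Finset.range (colLen p j)) := by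
  refine StrictAntiOn.injOn fun a ha b hb hab => ?_
  simp only [Finset.coe_range, Set.mem_Iio] at ha hb
  have hja := (lt_rowLen p).2 ha
  have hjb := (lt_rowLen p).2 hb
  have hba := rowLen_antitone p hab.le
  omega

theorem card_colHooks {N : ℕ} (p : N.Partition) (j : ℕ) : (colHooks p j).card = colLen p j := by
  rw [colHooks, Finset.card_image_of_injOn (colHook_injOn p j), Finset.card_range]

theorem zero_notMem_colHooks {N : ℕ} (p : N.Partition) (j : ℕ) : 0 ∉ colHooks p j := by
  simp only [colHooks, Finset.mem_image, Finset.mem_range, not_exists, not_and]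
  intro i hi
  have := (lt_rowLen p).2 hi
  omega

theorem colHooks_eq_empty {N : ℕ} (p : N.Partition) {j : ℕ} (hj : N ≤ j) : colHooks p j = ∅ := by
  rw [← Finset.card_eq_zero, card_colHooks, colLen_eq_zero p hj]

theorem colHooks_eq_prependColumn {N : ℕ} (p : N.Partition) (j : ℕ) :
    colHooks p j = prependColumn (colLen p j - colLen p (j + 1)) (colHooks p (j + 1)) := by
  have hle : colLen p (j + 1) ≤ colLen p j := colLen_antitone p (Nat.le_succ j)
  ext b
  rw [mem_prependColumn]
  simp only [colHooks, Finset.mem_image, Finset.mem_range]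
  constructor
  · rintro ⟨i, hi, rfl⟩
    have hij := (lt_rowLen p).2 hi
    by_cases hi' : i < colLen p (j + 1)
    · have hij' := (lt_rowLen p).2 hi'
      exact Or.inr ⟨by omega, i, hi', by omega⟩
    · have hij' := mt (lt_rowLen p).1 hi'
      exact Or.inl (by omega)
  · rintro (⟨hb, hbc⟩ | ⟨hcb, i, hi, hib⟩)
    · have hi : colLen p j - b < colLen p j := by omega
      have hij := (lt_rowLen p).2 hi
      have hij' := mt (lt_rowLen p (j := j + 1)).1 (by omega : ¬ colLen p j - b < _)
      exact ⟨_, hi, by omega⟩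
    · have hij := (lt_rowLen p).2 hi
      exact ⟨i, by omega, by omega⟩

theorem mem_hooks {N : ℕ} (p : N.Partition) {h : ℕ} : h ∈ hooks p ↔ ∃ j, h ∈ colHooks p j := by
  simp only [hooks, colHooks, Multiset.mem_map, Finset.mem_val, Finset.mem_filter,
    Finset.mem_product, Finset.mem_range, Finset.mem_image]
  constructor
  · rintro ⟨⟨i, j⟩, ⟨-, hj⟩, rfl⟩
    exact ⟨j, i, (lt_rowLen p).1 hj, rfl⟩
  · rintro ⟨j, i, hi, rfl⟩
    refine ⟨(i, j), ⟨⟨hi.trans_le (colLen_le p j), ?_⟩, (lt_rowLen p).2 hi⟩, rfl⟩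
    by_contra! hN
    exact hi.not_ge ((colLen_eq_zero p hN).trans_le i.zero_le)

theorem prod_map_hooks {N : ℕ} {M : Type*} [CommMonoid M] (p : N.Partition) (g : ℕ → M) :
    ((hooks p).map g).prod = ∏ j ∈ Finset.range N, ∏ b ∈ colHooks p j, g b := by
  rw [hooks, Multiset.map_map, ← Finset.prod_eq_multiset_prod, Finset.prod_filter,
    Finset.prod_product_right]
  refine Finset.prod_congr rfl fun j _ => ?_
  rw [colHooks, Finset.prod_image (colHook_injOn p j), ← Finset.prod_filter]
  refine Finset.prod_congr (Finset.ext fun i => ?_) fun _ _ => rfl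
  simp only [Finset.mem_filter, Finset.mem_range, lt_rowLen, and_iff_right_iff_imp]
  exact fun hi => hi.trans_le (colLen_le p j)

theorem exists_colHooks_eq_abacusBeads {N : ℕ} {p : N.Partition} (h : 3 ∉ hooks p) (j : ℕ) :
    ∃ v, colHooks p j = abacusBeads v := by
  rcases le_total N j with hj | hj
  · exact ⟨(0, 0), colHooks_eq_empty p hj⟩
  · induction hj using Nat.decreasingInduction with
    | self => exact ⟨(0, 0), colHooks_eq_empty p le_rfl⟩
    | of_succ j _ ih =>
      obtain ⟨v, hv⟩ := ih
      have h3 : 3 ∉ colHooks p j := fun h3 => h ((mem_hooks p).2 ⟨j, h3⟩)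
      rw [colHooks_eq_prependColumn, hv] at h3 ⊢
      exact exists_prependColumn_abacusBeads_eq h3

theorem colHooks_eq_iterate_abacusStep {N : ℕ} {p : N.Partition} (h : 3 ∉ hooks p) (j : ℕ) :
    colHooks p j = abacusBeads (abacusStep^[j] (runnerLengths (colHooks p 0))) := by
  induction j with
  | zero =>
    obtain ⟨v, hv⟩ := exists_colHooks_eq_abacusBeads h 0
    rw [hv, runnerLengths_abacusBeads, Function.iterate_zero_apply]
  | succ j ih =>
    rw [Function.iterate_succ_apply']
    rw [abacusBeads_eq_prependColumn, colHooks_eq_prependColumn] at ih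
    refine ((prependColumn_inj (zero_notMem_colHooks p (j + 1)) fun h0 => ?_).1 ih).2
    exact not_three_dvd_of_mem_abacusBeads h0 (dvd_zero 3)

theorem isThreeCore_iff_three_notMem_hooks {N : ℕ} {p : N.Partition} :
    IsThreeCore p ↔ 3 ∉ hooks p := by
  refine ⟨fun h h3 => h 3 h3 dvd_rfl, fun h b hb => ?_⟩
  obtain ⟨j, hj⟩ := (mem_hooks p).1 hb
  rw [colHooks_eq_iterate_abacusStep h] at hj
  exact not_three_dvd_of_mem_abacusBeads hj

namespace IsThreeCore

variable {N : ℕ} {p q : N.Partition}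

theorem colHooks_eq (h : IsThreeCore p) (j : ℕ) :
    colHooks p j = abacusBeads (abacusStep^[j] (runnerLengths (colHooks p 0))) :=
  colHooks_eq_iterate_abacusStep (isThreeCore_iff_three_notMem_hooks.1 h) j

theorem colLen_eq (h : IsThreeCore p) (j : ℕ) :
    colLen p j = (abacusStep^[j] (runnerLengths (colHooks p 0))).1 +
      (abacusStep^[j] (runnerLengths (colHooks p 0))).2 := by
  rw [← card_colHooks, h.colHooks_eq, card_abacusBeads]

theorem eq_of_runnerLengths_eq (hp : IsThreeCore p) (hq : IsThreeCore q)
    (h : runnerLengths (colHooks p 0) = runnerLengths (colHooks q 0)) : p = q :=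
  colLen_injective (funext fun j => by rw [hp.colLen_eq, hq.colLen_eq, h])

theorem iterate_abacusStep_eq_zero (h : IsThreeCore p) :
    abacusStep^[N] (runnerLengths (colHooks p 0)) = (0, 0) := by
  have hN := (h.colLen_eq N).symm.trans (colLen_eq_zero p le_rfl)
  exact Prod.ext (Nat.add_eq_zero_iff.1 hN).1 (Nat.add_eq_zero_iff.1 hN).2

theorem abacusSize_runnerLengths (h : IsThreeCore p) :
    abacusSize (runnerLengths (colHooks p 0)) = N := by
  rw [eq_sum_iterate_add abacusSize_eq N, h.iterate_abacusStep_eq_zero]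
  simp_rw [← h.colLen_eq]
  rw [← Nat.cast_sum, sum_colLen]
  simp [abacusSize]

end IsThreeCore

theorem colHooks_eq_of_colLen_eq {N : ℕ} {p : N.Partition} {v : ℕ × ℕ}
    (h : ∀ j, colLen p j = (abacusStep^[j] v).1 + (abacusStep^[j] v).2) (j : ℕ) :
    colHooks p j = abacusBeads (abacusStep^[j] v) := by
  have hlarge (j : ℕ) (hj : N ≤ j) : colHooks p j = abacusBeads (abacusStep^[j] v) := by
    rw [colHooks_eq_empty p hj, eq_comm, ← Finset.card_eq_zero, card_abacusBeads, ← h,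
      colLen_eq_zero p hj]
  rcases le_total N j with hj | hj
  · exact hlarge j hj
  · induction hj using Nat.decreasingInduction with
    | self => exact hlarge N le_rfl
    | of_succ j _ ih =>
      rw [colHooks_eq_prependColumn, abacusBeads_eq_prependColumn, ih, h, h,
        Function.iterate_succ_apply']

theorem exists_isThreeCore_runnerLengths_eq {N : ℕ} {v : ℕ × ℕ} (hv : abacusSize v = N) :
    ∃ p : N.Partition, IsThreeCore p ∧ runnerLengths (colHooks p 0) = v := by
  obtain ⟨n, hn⟩ := exists_iterate_abacusStep_eq_zero v
  have hsum : ∑ j ∈ Finset.range n, ((abacusStep^[j] v).1 + (abacusStep^[j] v).2) = N := by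
    rw [eq_sum_iterate_add abacusSize_eq n, hn, ← Nat.cast_sum] at hv
    exact_mod_cast (add_zero _).symm.trans hv
  obtain ⟨p, hp⟩ := exists_colLen_eq (antitone_add_iterate_abacusStep v) (by simp [hn]) hsum
  have hbeads := colHooks_eq_of_colLen_eq hp
  refine ⟨p, fun b hb => ?_, by rw [hbeads, Function.iterate_zero_apply, runnerLengths_abacusBeads]⟩
  obtain ⟨j, hj⟩ := (mem_hooks p).1 hb
  exact not_three_dvd_of_mem_abacusBeads (hbeads j ▸ hj)

/-- The product of `1 - 9 / h ^ 2` over the hook lengths `h` of `p`. -/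
def hookProd {N : ℕ} (p : N.Partition) : ℚ :=
  ((hooks p).map fun h : ℕ => 1 - 9 / (h : ℚ) ^ 2).prod

theorem hookProd_eq_zero {N : ℕ} {p : N.Partition} (h : ¬ IsThreeCore p) : hookProd p = 0 :=
  Multiset.prod_eq_zero (Multiset.mem_map.2
    ⟨3, not_not.1 (mt isThreeCore_iff_three_notMem_hooks.2 h), by norm_num⟩)

theorem IsThreeCore.hookProd_eq {N : ℕ} {p : N.Partition} (h : IsThreeCore p) :
    hookProd p = abacusWeight (runnerLengths (colHooks p 0)) := by
  rw [hookProd, prod_map_hooks, eq_prod_iterate_mul abacusWeight_eq N,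
    h.iterate_abacusStep_eq_zero]
  simp_rw [← h.colHooks_eq]
  norm_num [abacusWeight]

/-! ### Hook products as traces -/

/-- The Eisenstein integer `x` attached to the `3`-core with runner lengths `v`, chosen so that
`x.re + x.im = 3 * v.1 + 1` and `2 * x.re - x.im = 3 * v.2 + 2`, which are factors of both
the trace of `x ^ 3` and `2 * abacusWeight v`. -/
def eisensteinOfRunners (v : ℕ × ℕ) : EisensteinInt :=
  ⟨1 + v.1 + v.2, 2 * v.1 - v.2⟩

theorem eisensteinOfRunners_injective : Function.Injective eisensteinOfRunners := by
  intro v w h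
  have hre := congrArg QuadraticAlgebra.re h
  have him := congrArg QuadraticAlgebra.im h
  simp only [eisensteinOfRunners] at hre him
  exact Prod.ext (by omega) (by omega)

theorem norm_eisensteinOfRunners (v : ℕ × ℕ) :
    QuadraticAlgebra.norm (eisensteinOfRunners v) = 3 * abacusSize v + 1 := by
  rw [EisensteinInt.norm_eq, eisensteinOfRunners, abacusSize]
  ring

theorem trace_eisensteinOfRunners_pow_three (v : ℕ × ℕ) :
    ((QuadraticAlgebra.trace (eisensteinOfRunners v ^ 3) : ℤ) : ℚ) = 2 * abacusWeight v := by
  simp only [QuadraticAlgebra.trace_def, pow_succ, pow_zero, one_mul, QuadraticAlgebra.re_mul,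
    QuadraticAlgebra.im_mul, eisensteinOfRunners, abacusWeight]
  push_cast
  ring

theorem eisensteinOfRunners_mem_sector {N : ℕ} {v : ℕ × ℕ} (hv : abacusSize v = N) :
    eisensteinOfRunners v ∈ EisensteinInt.sector (3 * N + 1) := by
  have hnorm := norm_eisensteinOfRunners v
  rw [hv] at hnorm
  rw [EisensteinInt.mem_sector, EisensteinInt.mem_primaryOfNorm]
  refine ⟨⟨?_, hnorm⟩, ?_, ?_⟩
  · rw [EisensteinInt.mem_primary_iff_emod]
    simp only [eisensteinOfRunners]
    omega
  all_goals simp only [eisensteinOfRunners]; omega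

theorem exists_eisensteinOfRunners_eq {N : ℕ} {x : EisensteinInt}
    (hx : x ∈ EisensteinInt.sector (3 * N + 1)) :
    ∃ v, abacusSize v = N ∧ eisensteinOfRunners v = x := by
  obtain ⟨hx, hpos₁, hpos₂⟩ := EisensteinInt.mem_sector.1 hx
  obtain ⟨hprimary, hnorm⟩ := EisensteinInt.mem_primaryOfNorm.1 hx
  rw [EisensteinInt.mem_primary_iff_emod] at hprimary
  obtain ⟨a, ha⟩ : ∃ a : ℕ, x.re + x.im = 3 * a + 1 := ⟨((x.re + x.im) / 3).toNat, by omega⟩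
  obtain ⟨b, hb⟩ : ∃ b : ℕ, 2 * x.re - x.im = 3 * b + 2 :=
    ⟨((2 * x.re - x.im) / 3).toNat, by omega⟩
  have hab : eisensteinOfRunners (a, b) = x := by
    ext <;> simp only [eisensteinOfRunners] <;> omega
  rw [← hab, norm_eisensteinOfRunners] at hnorm
  exact ⟨(a, b), by omega, hab⟩

theorem two_mul_sum_hookProd (N : ℕ) :
    2 * ∑ p : N.Partition, hookProd p =
      ((∑ x ∈ EisensteinInt.sector (3 * N + 1), QuadraticAlgebra.trace (x ^ 3) : ℤ) : ℚ) := by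
  classical
  rw [← Finset.sum_filter_of_ne (p := IsThreeCore) fun p _ hp => not_not.1 (mt hookProd_eq_zero hp),
    Finset.mul_sum, Int.cast_sum]
  refine Finset.sum_nbij (fun p => eisensteinOfRunners (runnerLengths (colHooks p 0))) ?_ ?_ ?_ ?_
  · exact fun p hp =>
      eisensteinOfRunners_mem_sector (Finset.mem_filter.1 hp).2.abacusSize_runnerLengths
  · exact fun p hp q hq h => (Finset.mem_filter.1 hp).2.eq_of_runnerLengths_eq
      (Finset.mem_filter.1 hq).2 (eisensteinOfRunners_injective h)
  · intro x hx
    obtain ⟨v, hv, rfl⟩ := exists_eisensteinOfRunners_eq (Finset.mem_coe.1 hx)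
    obtain ⟨p, hp, rfl⟩ := exists_isThreeCore_runnerLengths_eq hv
    exact ⟨p, Finset.mem_coe.2 (Finset.mem_filter.2 ⟨Finset.mem_univ p, hp⟩), rfl⟩
  · intro p hp
    rw [trace_eisensteinOfRunners_pow_three, (Finset.mem_filter.1 hp).2.hookProd_eq]

theorem sum_hook_prod_eq_zero_iff_no_three_core (N : ℕ) (hN : 0 < N) :
    (∑ p : N.Partition, ((hooks p).map (fun h => 1 - 9 / (h : ℚ) ^ 2)).prod) = 0 ↔
      ¬ ∃ p : N.Partition, IsThreeCore p := by
  -- With `h : ℚ`, elaboration coerces the whole multiset `hooks p` through its monad structure.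
  have hcast (p : N.Partition) : (hooks p >>= fun a => pure (a : ℚ)) = (hooks p).map (↑) := by
    simp
  simp_rw [hcast, Multiset.map_map, Function.comp_def]
  change ∑ p : N.Partition, hookProd p = 0 ↔ _
  constructor
  · rintro h ⟨p, hp⟩
    have hx := eisensteinOfRunners_mem_sector hp.abacusSize_runnerLengths
    obtain ⟨hprimary, hnorm⟩ :=
      EisensteinInt.mem_primaryOfNorm.1 (EisensteinInt.mem_sector.1 hx).1
    have hne := EisensteinInt.sum_sector_trace_pow_ne_zero dvd_rfl three_ne_zero hprimary
    have hsum := two_mul_sum_hookProd N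
    rw [h, mul_zero] at hsum
    exact hne (hnorm ▸ by exact_mod_cast hsum.symm)
  · exact fun h => Finset.sum_eq_zero fun p _ => hookProd_eq_zero fun hp => h ⟨p, hp⟩
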